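/- Valid interval assignments lower-bound the optimum within factor 4: let the machine types satisfy c_k = 2^k, strictly increasing capacities B_k ∈ ℤ≥1, and non-increasing cost-per-job 2^k/B_k ≥ 2^{k+1}/B_{k+1} for all k. Let J be a finite instance of unit-length jobs and let 𝒜 = {(I, t_I, J_I)} be a valid interval assignment for J. Then every valid schedule S for J satisfies cost(S) ≥ (1/4)·Σ_{(I,t_I,J_I)∈𝒜} 2^{t_I}; in particular OPT(J) ≥ (1/4)·Σ_{(I,t_I,J_I)∈𝒜} 2^{t_I}. -/

import Mathlib

structure SchedInstance where
  jobs : Finset ℕ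
  r : ℕ → ℤ
  d : ℕ → ℤ
  window : ∀ j ∈ jobs, r j ≤ d j

structure Batch where
  btype : ℕ
  time : ℤ
  bjobs : Finset ℕ
deriving DecidableEq

def ValidSchedule (B : ℕ → ℕ) (P : SchedInstance) (S : Finset Batch) : Prop :=
  (∀ X ∈ S, X.bjobs.card ≤ B X.btype) ∧
  (∀ X ∈ S, ∀ j ∈ X.bjobs, j ∈ P.jobs ∧ P.r j ≤ X.time ∧ X.time ≤ P.d j) ∧
  (∀ X ∈ S, ∀ Y ∈ S, X ≠ Y → Disjoint X.bjobs Y.bjobs) ∧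
  (∀ j ∈ P.jobs, ∃ X ∈ S, j ∈ X.bjobs)

noncomputable def schedCost (c : ℕ → ℝ) (S : Finset Batch) : ℝ :=
  ∑ X ∈ S, c X.btype

noncomputable def OPT (c : ℕ → ℝ) (B : ℕ → ℕ) (P : SchedInstance) : ℝ :=
  sInf {x : ℝ | ∃ S : Finset Batch, ValidSchedule B P S ∧ schedCost c S = x}

/-- A tuple `(I, t_I, J_I)` of an interval assignment: a closed interval
`[lo, hi]` of the (integer) time horizon, a machine type, and a set of jobs. -/
structure IAItem where
  lo : ℤ
  hi : ℤ
  itype : ℕ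
  ijobs : Finset ℕ
deriving DecidableEq

/-- A valid interval assignment (Definition of the paper):
(1) `|J_I| = B (t_I - 1)` if `t_I ≥ 1`, and `|J_I| = 1` if `t_I = 0`;
(2) `[r_j, d_j] ⊆ I` for every `j ∈ J_I` (and `J_I ⊆ J`);
(3) distinct tuples of equal type have disjoint intervals;
(4) every job lies in at most one `J_I`. -/
def ValidAssignment (B : ℕ → ℕ) (P : SchedInstance) (A : Finset IAItem) : Prop :=
  (∀ e ∈ A, if e.itype = 0 then e.ijobs.card = 1 else e.ijobs.card = B (e.itype - 1)) ∧
  (∀ e ∈ A, ∀ j ∈ e.ijobs, j ∈ P.jobs ∧ e.lo ≤ P.r j ∧ P.d j ≤ e.hi) ∧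
  (∀ e ∈ A, ∀ e' ∈ A, e ≠ e' → e.itype = e'.itype →
      Set.Icc e.lo e.hi ∩ Set.Icc e'.lo e'.hi = ∅) ∧
  (∀ e ∈ A, ∀ e' ∈ A, e ≠ e' → Disjoint e.ijobs e'.ijobs)

/-!
Fix a schedule and call an item dominated if some batch of at least its type runs one of its jobs.

* A batch runs at a single time, which lies in the window of each of its jobs, so the items it
  dominates have intersecting intervals and hence distinct types. For costs `2 ^ k` their weights
  sum to at most twice the cost of the batch.
* All jobs of an undominated item of type `t` run on types below `t`, where the cost per job is at
  least that of type `t - 1`. As the item has `B (t - 1)` jobs, the batches spend at least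
  `2 ^ (t - 1)` on them, which is half of its weight.

The two factors are the constants `α` and `β` of the bound for general costs, so `4 = 2 + 2`.
-/

open Finset

theorem sum_card_inter_le_card {ι α : Type*} [DecidableEq α] {s : Finset ι} {f : ι → Finset α}
    (hf : (s : Set ι).PairwiseDisjoint f) (u : Finset α) : ∑ i ∈ s, #(u ∩ f i) ≤ #u := by
  rw [← card_biUnion (hf.mono fun _ => inter_subset_right)]
  exact card_le_card (biUnion_subset.mpr fun _ _ => inter_subset_left)

theorem card_le_sum_card_inter {ι α : Type*} [DecidableEq α] {s : Finset ι} {f : ι → Finset α}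
    {u : Finset α} (hu : u ⊆ s.biUnion f) : #u ≤ ∑ i ∈ s, #(f i ∩ u) := by
  calc #u
      = #(s.biUnion fun i => f i ∩ u) := by rw [← biUnion_inter, inter_eq_right.mpr hu]
    _ ≤ ∑ i ∈ s, #(f i ∩ u) := card_biUnion_le

theorem sum_biUnion_le_sum {ι α M : Type*} [DecidableEq α] [AddCommMonoid M] [PartialOrder M]
    [IsOrderedAddMonoid M] (s : Finset ι) (t : ι → Finset α) {f : α → M} (hf : ∀ a, 0 ≤ f a) :
    ∑ a ∈ s.biUnion t, f a ≤ ∑ i ∈ s, ∑ a ∈ t i, f a := by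
  have image_snd_sigma : (s.sigma t).image Sigma.snd = s.biUnion t := by ext; simp
  rw [sum_sigma', ← image_snd_sigma]
  exact sum_image_le_of_nonneg fun a _ => hf a

theorem sum_range_succ_two_pow_le (T : ℕ) : ∑ t ∈ range (T + 1), (2 : ℝ) ^ t ≤ 2 * 2 ^ T := by
  rw [geom_sum_eq (by norm_num), pow_succ]
  linarith

/-- The items of `A` dominated by the batch `X`: those whose type is at most that of `X` and one of
whose jobs is run by `X`. Such an item is charged in full to `X`. -/
def dominatedItems (A : Finset IAItem) (X : Batch) : Finset IAItem :=
  {e ∈ A | e.itype ≤ X.btype ∧ ¬Disjoint X.bjobs e.ijobs}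

/-- The part of the cost of the batch `X` that is spent on jobs of the item `e`, each job being
charged the cost per unit of capacity, so that unused capacity is charged to no item. -/
noncomputable def itemShare (c : ℕ → ℝ) (B : ℕ → ℕ) (X : Batch) (e : IAItem) : ℝ :=
  #(X.bjobs ∩ e.ijobs) * (c X.btype / B X.btype)

section

variable {c : ℕ → ℝ} {B : ℕ → ℕ} {P : SchedInstance} {A : Finset IAItem} {S : Finset Batch}
  {X : Batch} {e : IAItem}

theorem time_mem_Icc_of_not_disjoint (hA : ValidAssignment B P A) (hS : ValidSchedule B P S)
    (he : e ∈ A) (hX : X ∈ S) (hXe : ¬Disjoint X.bjobs e.ijobs) : X.time ∈ Set.Icc e.lo e.hi := by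
  obtain ⟨-, window_subset, -, -⟩ := hA
  obtain ⟨-, time_mem_window, -, -⟩ := hS
  obtain ⟨j, hjX, hje⟩ := not_disjoint_iff.mp hXe
  obtain ⟨-, hr, hd⟩ := time_mem_window X hX j hjX
  obtain ⟨-, hlo, hhi⟩ := window_subset e he j hje
  exact ⟨hlo.trans hr, hd.trans hhi⟩

theorem injOn_itype_dominatedItems (hA : ValidAssignment B P A) (hS : ValidSchedule B P S)
    (hX : X ∈ S) : Set.InjOn IAItem.itype (dominatedItems A X) := by
  intro e he e' he' htype
  obtain ⟨heA, -, hXe⟩ := mem_filter.mp he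
  obtain ⟨heA', -, hXe'⟩ := mem_filter.mp he'
  by_contra hne
  exact (hA.2.2.1 e heA e' heA' hne htype).subset
    ⟨time_mem_Icc_of_not_disjoint hA hS heA hX hXe,
      time_mem_Icc_of_not_disjoint hA hS heA' hX hXe'⟩

theorem sum_dominatedItems_le_sum_range (hc : ∀ k, 0 ≤ c k) (hA : ValidAssignment B P A)
    (hS : ValidSchedule B P S) (hX : X ∈ S) :
    ∑ e ∈ dominatedItems A X, c e.itype ≤ ∑ t ∈ range (X.btype + 1), c t := by
  rw [← sum_image (f := c) (injOn_itype_dominatedItems hA hS hX)]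
  refine sum_le_sum_of_subset_of_nonneg (image_subset_iff.mpr fun e he => ?_) fun t _ _ => hc t
  exact mem_range_succ_iff.mpr (mem_filter.mp he).2.1

theorem sum_biUnion_dominatedItems_le {α : ℝ} (hc : ∀ k, 0 ≤ c k)
    (hα : ∀ T, ∑ t ∈ range (T + 1), c t ≤ α * c T) (hA : ValidAssignment B P A)
    (hS : ValidSchedule B P S) :
    ∑ e ∈ S.biUnion (dominatedItems A), c e.itype ≤ α * schedCost c S := by
  calc ∑ e ∈ S.biUnion (dominatedItems A), c e.itype
      ≤ ∑ X ∈ S, ∑ e ∈ dominatedItems A X, c e.itype :=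
        sum_biUnion_le_sum S (dominatedItems A) fun e => hc e.itype
    _ ≤ ∑ X ∈ S, α * c X.btype :=
        sum_le_sum fun X hX => (sum_dominatedItems_le_sum_range hc hA hS hX).trans (hα X.btype)
    _ = α * schedCost c S := (mul_sum ..).symm

theorem itemShare_nonneg (hc : ∀ k, 0 ≤ c k) (X : Batch) (e : IAItem) :
    0 ≤ itemShare c B X e :=
  mul_nonneg (Nat.cast_nonneg _) (div_nonneg (hc _) (Nat.cast_nonneg _))

theorem sum_itemShare_le (hc : ∀ k, 0 ≤ c k) (hA : ValidAssignment B P A)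
    (hS : ValidSchedule B P S) (hX : X ∈ S) : ∑ e ∈ A, itemShare c B X e ≤ c X.btype := by
  obtain ⟨-, -, -, disjoint_ijobs⟩ := hA
  obtain ⟨card_le_capacity, -, -, -⟩ := hS
  have card_le : ∑ e ∈ A, #(X.bjobs ∩ e.ijobs) ≤ B X.btype :=
    (sum_card_inter_le_card (fun e he e' he' => disjoint_ijobs e he e' he') X.bjobs).trans
      (card_le_capacity X hX)
  calc ∑ e ∈ A, itemShare c B X e
      = (∑ e ∈ A, #(X.bjobs ∩ e.ijobs) : ℕ) * (c X.btype / B X.btype) := by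
        rw [Nat.cast_sum, sum_mul]; rfl
    _ = c X.btype * ((∑ e ∈ A, #(X.bjobs ∩ e.ijobs) : ℕ) / B X.btype) := mul_div_left_comm ..
    _ ≤ c X.btype :=
        mul_le_of_le_one_right (hc _)
          (div_le_one_of_le₀ (Nat.cast_le.mpr card_le) (Nat.cast_nonneg _))

theorem ijobs_subset_biUnion_bjobs (hA : ValidAssignment B P A) (hS : ValidSchedule B P S)
    (he : e ∈ A) : e.ijobs ⊆ S.biUnion Batch.bjobs := fun j hj =>
  mem_biUnion.mpr (hS.2.2.2 j (hA.2.1 e he j hj).1)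

theorem ijobs_nonempty (hB : ∀ k, 1 ≤ B k) (hA : ValidAssignment B P A) (he : e ∈ A) :
    e.ijobs.Nonempty := by
  have hcard := hA.1 e he
  rw [← card_pos]
  split_ifs at hcard with h0
  · omega
  · exact hcard ▸ hB _

theorem btype_lt_itype_of_notMem (he : e ∈ A) (hdom : e ∉ S.biUnion (dominatedItems A))
    (hX : X ∈ S) (hXe : ¬Disjoint X.bjobs e.ijobs) : X.btype < e.itype := by
  by_contra! hle
  exact hdom (mem_biUnion.mpr ⟨X, hX, mem_filter.mpr ⟨he, hle, hXe⟩⟩)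

theorem itype_ne_zero_of_notMem (hB : ∀ k, 1 ≤ B k) (hA : ValidAssignment B P A)
    (hS : ValidSchedule B P S) (he : e ∈ A) (hdom : e ∉ S.biUnion (dominatedItems A)) :
    e.itype ≠ 0 := by
  obtain ⟨j, hj⟩ := ijobs_nonempty hB hA he
  obtain ⟨X, hX, hjX⟩ := mem_biUnion.mp (ijobs_subset_biUnion_bjobs hA hS he hj)
  exact Nat.ne_zero_of_lt
    (btype_lt_itype_of_notMem he hdom hX (not_disjoint_iff.mpr ⟨j, hjX, hj⟩))

theorem le_sum_itemShare_of_notMem (hc : ∀ k, 0 ≤ c k) (hB : ∀ k, 1 ≤ B k)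
    (hcpj : Antitone fun k => c k / B k) (hA : ValidAssignment B P A) (hS : ValidSchedule B P S)
    (he : e ∈ A) (hdom : e ∉ S.biUnion (dominatedItems A)) :
    c (e.itype - 1) ≤ ∑ X ∈ S, itemShare c B X e := by
  have card_eq : #e.ijobs = B (e.itype - 1) := by
    simpa only [if_neg (itype_ne_zero_of_notMem hB hA hS he hdom)] using hA.1 e he
  set s := e.itype - 1
  have hBs : (B s : ℝ) ≠ 0 := Nat.cast_ne_zero.mpr (Nat.one_le_iff_ne_zero.mp (hB s))
  have share_ge : ∀ X ∈ S, #(X.bjobs ∩ e.ijobs) * (c s / B s) ≤ itemShare c B X e := by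
    intro X hX
    by_cases hXe : Disjoint X.bjobs e.ijobs
    · simpa [disjoint_iff_inter_eq_empty.mp hXe] using itemShare_nonneg hc X e
    · exact mul_le_mul_of_nonneg_left
        (hcpj (Nat.le_sub_one_of_lt (btype_lt_itype_of_notMem he hdom hX hXe)))
        (Nat.cast_nonneg _)
  calc c s = #e.ijobs * (c s / B s) := by rw [card_eq, mul_div_cancel₀ _ hBs]
    _ ≤ (∑ X ∈ S, #(X.bjobs ∩ e.ijobs) : ℕ) * (c s / B s) := by
        gcongr
        · exact div_nonneg (hc s) (Nat.cast_nonneg _)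
        · exact card_le_sum_card_inter (ijobs_subset_biUnion_bjobs hA hS he)
    _ = ∑ X ∈ S, #(X.bjobs ∩ e.ijobs) * (c s / B s) := by rw [Nat.cast_sum, sum_mul]
    _ ≤ ∑ X ∈ S, itemShare c B X e := sum_le_sum share_ge

theorem sum_sdiff_biUnion_dominatedItems_le {β : ℝ} (hc : ∀ k, 0 ≤ c k) (hβ : 0 ≤ β)
    (hcβ : ∀ k, c (k + 1) ≤ β * c k) (hB : ∀ k, 1 ≤ B k) (hcpj : Antitone fun k => c k / B k)
    (hA : ValidAssignment B P A) (hS : ValidSchedule B P S) :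
    ∑ e ∈ A \ S.biUnion (dominatedItems A), c e.itype ≤ β * schedCost c S := by
  have weight_le : ∀ e ∈ A \ S.biUnion (dominatedItems A),
      c e.itype ≤ β * ∑ X ∈ S, itemShare c B X e := by
    intro e he
    obtain ⟨heA, hdom⟩ := mem_sdiff.mp he
    calc c e.itype = c (e.itype - 1 + 1) := by
          rw [Nat.sub_one_add_one (itype_ne_zero_of_notMem hB hA hS heA hdom)]
      _ ≤ β * c (e.itype - 1) := hcβ _
      _ ≤ β * ∑ X ∈ S, itemShare c B X e :=
          mul_le_mul_of_nonneg_left (le_sum_itemShare_of_notMem hc hB hcpj hA hS heA hdom) hβ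
  calc ∑ e ∈ A \ S.biUnion (dominatedItems A), c e.itype
      ≤ ∑ e ∈ A \ S.biUnion (dominatedItems A), β * ∑ X ∈ S, itemShare c B X e :=
        sum_le_sum weight_le
    _ ≤ ∑ e ∈ A, β * ∑ X ∈ S, itemShare c B X e :=
        sum_le_sum_of_subset_of_nonneg sdiff_subset fun e _ _ =>
          mul_nonneg hβ (sum_nonneg fun X _ => itemShare_nonneg hc X e)
    _ = β * ∑ X ∈ S, ∑ e ∈ A, itemShare c B X e := by rw [← mul_sum, sum_comm]
    _ ≤ β * schedCost c S :=
        mul_le_mul_of_nonneg_left (sum_le_sum fun X hX => sum_itemShare_le hc hA hS hX) hβ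

theorem exists_validSchedule (hB : 1 ≤ B 0) (P : SchedInstance) :
    ∃ S : Finset Batch, ValidSchedule B P S := by
  refine ⟨P.jobs.image fun j => ⟨0, P.r j, {j}⟩, ?_, ?_, ?_, ?_⟩
  · simp [hB]
  · simpa using fun j hj => ⟨hj, P.window j hj⟩
  · simp only [forall_mem_image]
    intro i _ j _ hne
    refine disjoint_singleton.mpr ?_
    rintro rfl
    exact hne rfl
  · exact fun j hj => ⟨_, mem_image_of_mem _ hj, mem_singleton_self j⟩

theorem le_OPT {a : ℝ} (hB : 1 ≤ B 0)
    (ha : ∀ S : Finset Batch, ValidSchedule B P S → a ≤ schedCost c S) : a ≤ OPT c B P := by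
  obtain ⟨S, hS⟩ := exists_validSchedule hB P
  refine le_csInf ⟨_, S, hS, rfl⟩ ?_
  rintro _ ⟨T, hT, rfl⟩
  exact ha T hT

end

theorem interval_assignment_lower_bound_general {c : ℕ → ℝ} {B : ℕ → ℕ} {α β : ℝ}
    (hc : ∀ k, 0 < c k) (hα : ∀ T, ∑ t ∈ range (T + 1), c t ≤ α * c T)
    (hβ : ∀ k, c (k + 1) ≤ β * c k) (hB : ∀ k, 1 ≤ B k) (hcpj : Antitone fun k => c k / B k)
    {P : SchedInstance} {A : Finset IAItem} (hA : ValidAssignment B P A) :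
    (∀ S : Finset Batch, ValidSchedule B P S →
        1 / (α + β) * ∑ e ∈ A, c e.itype ≤ schedCost c S) ∧
      1 / (α + β) * ∑ e ∈ A, c e.itype ≤ OPT c B P := by
  have hc0 : ∀ k, 0 ≤ c k := fun k => (hc k).le
  have α_pos : 0 < α :=
    pos_of_mul_pos_left ((sum_pos (fun t _ => hc t) nonempty_range_add_one).trans_le (hα 0)) (hc0 0)
  have β_pos : 0 < β := pos_of_mul_pos_left ((hc 1).trans_le (hβ 0)) (hc0 0)
  have le_schedCost : ∀ S : Finset Batch, ValidSchedule B P S →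
      1 / (α + β) * ∑ e ∈ A, c e.itype ≤ schedCost c S := by
    intro S hS
    have dominated_subset : S.biUnion (dominatedItems A) ⊆ A :=
      biUnion_subset.mpr fun X _ => filter_subset _ A
    rw [one_div_mul_eq_div, div_le_iff₀' (add_pos α_pos β_pos), add_mul, add_comm,
      ← sum_sdiff dominated_subset]
    exact add_le_add (sum_sdiff_biUnion_dominatedItems_le hc0 β_pos.le hβ hB hcpj hA hS)
      (sum_biUnion_dominatedItems_le hc0 hα hA hS)
  exact ⟨le_schedCost, le_OPT (hB 0) le_schedCost⟩

/-- with costs `2^k`, strictly increasing capacities and non-increasing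
cost-per-job, every valid schedule costs at least `(1/4) ∑_{(I,t_I,J_I) ∈ 𝒜} 2^{t_I}`
for any valid interval assignment `𝒜`; in particular so does `OPT`. -/
theorem interval_assignment_lower_bound
    (B : ℕ → ℕ) (hB1 : ∀ k, 1 ≤ B k) (hBmono : StrictMono B)
    (hcpj : ∀ k, (2 : ℝ) ^ (k + 1) / (B (k + 1) : ℝ) ≤ (2 : ℝ) ^ k / (B k : ℝ))
    (P : SchedInstance) (A : Finset IAItem) (hA : ValidAssignment B P A) :
    (∀ S : Finset Batch, ValidSchedule B P S →
        (1 / 4 : ℝ) * ∑ e ∈ A, (2 : ℝ) ^ e.itype ≤ schedCost (fun k => (2 : ℝ) ^ k) S) ∧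
      (1 / 4 : ℝ) * ∑ e ∈ A, (2 : ℝ) ^ e.itype ≤ OPT (fun k => (2 : ℝ) ^ k) B P := by
  rw [show (1 / 4 : ℝ) = 1 / (2 + 2) by norm_num]
  exact interval_assignment_lower_bound_general (fun k => by positivity) sum_range_succ_two_pow_le
    (fun k => (pow_succ' 2 k).le) hB1 (antitone_nat_of_succ_le hcpj) hA
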